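/- For n ≥ 3, let C_n be the digraph on vertices {1, …, n} consisting of the directed cycle 1→2→⋯→n→1 together with a loop at each vertex, i.e., (i,j) ∈ E(C_n) iff j = i or j ≡ i+1 (mod n). Then the leafage satisfies l(C_n) = n, while f(C_n) = f*(C_n) = 3. -/

import Mathlib

/-- A subtree representation of a digraph with edge relation `E` on vertex type `V`
in a host graph `T` on vertex type `W`: each digraph vertex `v` gets a source set
`src v` and a sink set `snk v`, each inducing a connected (hence nonempty) subgraph
of `T`, such that `E u v` holds iff `src u` meets `snk v`. -/
structure SubtreeRep {V W : Type} (E : V → V → Prop) (T : SimpleGraph W) where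
  src : V → Set W
  snk : V → Set W
  src_connected : ∀ v, (T.induce (src v)).Connected
  snk_connected : ∀ v, (T.induce (snk v)).Connected
  rep : ∀ u v, E u v ↔ (src u ∩ snk v).Nonempty

/-- The set of leaves (vertices of degree 1) of a graph. -/
def treeLeaves {W : Type} (T : SimpleGraph W) : Set W :=
  {w | (T.neighborSet w).ncard = 1}

/-- The leafage of a digraph: the minimum number of leaves of a finite host tree in
which the digraph has a subtree representation. -/
noncomputable def digLeafage {V : Type} (E : V → V → Prop) : ℕ :=
  sInf {k | ∃ (W : Type) (_ : Fintype W) (T : SimpleGraph W),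
    T.IsTree ∧ Nonempty (SubtreeRep E T) ∧ (treeLeaves T).ncard = k}

/-- The catch leafage of a digraph: the minimum number of leaves of a finite host tree
in which the digraph has a subtree representation all of whose sink sets are single
vertices. -/
noncomputable def catchLeafage {V : Type} (E : V → V → Prop) : ℕ :=
  sInf {k | ∃ (W : Type) (_ : Fintype W) (T : SimpleGraph W) (R : SubtreeRep E T),
    T.IsTree ∧ (∀ v, ∃ x, R.snk v = {x}) ∧ (treeLeaves T).ncard = k}

/-- `C` is between `A` and `B` in `T`: `A` and `B` are disjoint and the unique path of
`T` from `A` to `B` (i.e. the path meeting `A` only at its first vertex and `B` only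
at its last vertex) contains a vertex of `C` (possibly an endpoint). -/
def Between {W : Type} (T : SimpleGraph W) (A B C : Set W) : Prop :=
  A ∩ B = ∅ ∧ ∃ (a b : W) (p : T.Walk a b), a ∈ A ∧ b ∈ B ∧ p.IsPath ∧
    (∀ x ∈ p.support, x ∈ A → x = a) ∧ (∀ x ∈ p.support, x ∈ B → x = b) ∧
    ∃ x ∈ C, x ∈ p.support

/-- An asteroidal collection of sets in `T`: pairwise disjoint, and no member is
between two other members. -/
def Asteroidal {W ι : Type} (T : SimpleGraph W) (F : ι → Set W) : Prop :=
  (∀ i j, i ≠ j → F i ∩ F j = ∅) ∧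
  ∀ i j k, i ≠ j → i ≠ k → j ≠ k → ¬ Between T (F i) (F j) (F k)

/-- The star `K_{1,n}`: the center `none` is adjacent to the `n` leaves `some i`. -/
def starGraph (n : ℕ) : SimpleGraph (Option (Fin n)) :=
  SimpleGraph.fromRel (fun a _ => a = none)

/-- A Ferrers digraph: the successor sets are linearly ordered by inclusion. -/
def IsFerrers {V : Type} (F : V → V → Prop) : Prop :=
  ∀ u u' : V, {v | F u v} ⊆ {v | F u' v} ∨ {v | F u' v} ⊆ {v | F u v}

/-- The Ferrers dimension `f(D)`: the minimum number of Ferrers digraphs whose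
intersection is `E`. -/
noncomputable def ferrersDim {V : Type} (E : V → V → Prop) : ℕ :=
  sInf {k | ∃ F : Fin k → V → V → Prop,
    (∀ i, IsFerrers (F i)) ∧ (∀ u v, E u v ↔ ∀ i, F i u v)}

/-- `f*(D)`: the minimum number of pairwise edge-disjoint Ferrers digraphs whose
union is the complement of `E` in `V × V`. -/
noncomputable def fstar {V : Type} (E : V → V → Prop) : ℕ :=
  sInf {k | ∃ F : Fin k → V → V → Prop,
    (∀ i, IsFerrers (F i)) ∧
    (∀ i j, i ≠ j → ∀ u v, ¬ (F i u v ∧ F j u v)) ∧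
    (∀ u v, ¬ E u v ↔ ∃ i, F i u v)}

/-- The width of the incidence poset `P(D)`: the maximum size of an antichain (under
inclusion) of predecessor sets of the digraph `E`. -/
noncomputable def incWidth {V : Type} (E : V → V → Prop) : ℕ :=
  sSup {k | ∃ A : Finset (Set V),
    (↑A : Set (Set V)) ⊆ Set.range (fun v => {u | E u v}) ∧
    IsAntichain (· ⊆ ·) (↑A : Set (Set V)) ∧ A.card = k}

/-- The digraph `D_n` with adjacency matrix `J - I`: all pairs of distinct vertices. -/
def DnRel (n : ℕ) (i j : Fin n) : Prop := i ≠ j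

/-- The digraph `E_n` with adjacency matrix `[[I, Y], [Yᵀ, 0]]` (vertex `n-1` playing
the role of the last row/column). -/
def EnRel (n : ℕ) (i j : Fin n) : Prop :=
  (i.val < n - 1 ∧ j.val < n - 1 ∧ i = j) ∨
  (i.val < n - 1 ∧ j.val = n - 1) ∨
  (i.val = n - 1 ∧ j.val < n - 1)

/-- The digraph `C_n`: a directed `n`-cycle plus a loop at each vertex. -/
def CnRel (n : ℕ) (i j : Fin n) : Prop := j = i ∨ j.val = (i.val + 1) % n

/-- The digraph `M_{k,m}` on `Fin k × Fin m`: identity diagonal blocks, all-ones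
blocks above the diagonal, all-zeros blocks below. -/
def MkmRel (k m : ℕ) (p q : Fin k × Fin m) : Prop :=
  p.1 < q.1 ∨ (p.1 = q.1 ∧ p.2 = q.2)

/-- The digraph `F_n` with adjacency matrix `[[I, Y], [Yᵀ, 1]]` (vertex `n-1` playing
the role of the last row/column). -/
def FnRel (n : ℕ) (i j : Fin n) : Prop := i = j ∨ i.val = n - 1 ∨ j.val = n - 1

/-- The digraph `P_n`: a directed path `1 → 2 → ⋯ → n` plus a loop at each vertex. -/
def PnRel (n : ℕ) (i j : Fin n) : Prop := j = i ∨ j.val = i.val + 1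


/-! ### Connected vertex sets and sides of tree edges -/

/-- A nonempty vertex set `S` is connected in `T` if every set of vertices that meets `S` and is
closed under adjacency within `S` contains `S`. -/
def IsConnSet {W : Type} (T : SimpleGraph W) (S : Set W) : Prop :=
  S.Nonempty ∧ ∀ P : Set W, ∀ x ∈ S, x ∈ P →
    (∀ u ∈ S, ∀ v ∈ S, T.Adj u v → u ∈ P → v ∈ P) → S ⊆ P

lemma SimpleGraph.Preconnected.mem_of_closed {W : Type} {T : SimpleGraph W}
    (hT : T.Preconnected) {P : Set W} (hP : ∀ u v, T.Adj u v → u ∈ P → v ∈ P) {x : W}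
    (hx : x ∈ P) (y : W) : y ∈ P := by
  obtain ⟨p⟩ := hT x y
  induction p with
  | nil => exact hx
  | cons h _ ih => exact ih (hP _ _ h hx)

lemma isConnSet_of_induce_connected {W : Type} {T : SimpleGraph W} {S : Set W}
    (h : (T.induce S).Connected) : IsConnSet T S := by
  refine ⟨Set.nonempty_coe_sort.mp h.nonempty, fun P x hx hxP hP y hy => ?_⟩
  exact h.preconnected.mem_of_closed (P := {w : S | (w : W) ∈ P})
    (fun u v huv hu => hP u u.2 v v.2 huv hu) (x := ⟨x, hx⟩) hxP ⟨y, hy⟩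

lemma IsConnSet.exists_adj_of_mem_of_notMem {W : Type} {T : SimpleGraph W} {S P : Set W}
    (hS : IsConnSet T S) {x y : W} (hx : x ∈ S) (hxP : x ∈ P) (hy : y ∈ S) (hyP : y ∉ P) :
    ∃ u ∈ S, ∃ v ∈ S, T.Adj u v ∧ u ∈ P ∧ v ∉ P := by
  by_contra! h
  exact hyP (hS.2 P x hx hxP h hy)

/-- The vertices on the side of `b` when the edge `ab` is deleted. -/
def edgeSide {W : Type} (T : SimpleGraph W) (a b : W) : Set W :=
  {w | (T.deleteEdges {s(a, b)}).Reachable b w}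

section EdgeSide

variable {W : Type} {T : SimpleGraph W} {a b c : W}

lemma right_mem_edgeSide : b ∈ edgeSide T a b := SimpleGraph.Reachable.refl _

lemma left_notMem_edgeSide (hT : T.IsTree) (hab : T.Adj a b) : a ∉ edgeSide T a b :=
  fun h => SimpleGraph.isAcyclic_iff_forall_adj_isBridge.mp hT.isAcyclic hab h.symm

lemma mem_edgeSide_of_adj {u v : W} (huv : T.Adj u v) (hne : s(u, v) ≠ s(a, b))
    (hu : u ∈ edgeSide T a b) : v ∈ edgeSide T a b :=
  SimpleGraph.Reachable.trans hu
    (SimpleGraph.Adj.reachable (by simpa [SimpleGraph.deleteEdges_adj, huv] using hne))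

lemma edgeSide_disjoint (hT : T.IsTree) (hab : T.Adj a b) (hac : T.Adj a c) (hbc : b ≠ c) {w : W}
    (hb : w ∈ edgeSide T a b) : w ∉ edgeSide T a c := by
  intro hc
  have key := hT.connected.preconnected.mem_of_closed
    (P := edgeSide T a b ∩ edgeSide T a c) ?_ ⟨hb, hc⟩ a
  · exact left_notMem_edgeSide hT hab key.1
  rintro u v huv ⟨hu1, hu2⟩
  have hua : u ≠ a := fun h => left_notMem_edgeSide hT hab (h ▸ hu1)
  have hub : u ≠ b := by
    rintro rfl
    refine left_notMem_edgeSide hT hac (mem_edgeSide_of_adj hab.symm ?_ hu2)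
    simp [hbc, hua]
  have huc : u ≠ c := by
    rintro rfl
    refine left_notMem_edgeSide hT hab (mem_edgeSide_of_adj hac.symm ?_ hu1)
    simp [hub, hua]
  exact ⟨mem_edgeSide_of_adj huv (by simp [hua, hub]) hu1,
    mem_edgeSide_of_adj huv (by simp [hua, huc]) hu2⟩

lemma mem_edgeSide_swap (hT : T.IsTree) (hab : T.Adj a b) {w : W} :
    w ∈ edgeSide T b a ↔ w ∉ edgeSide T a b := by
  constructor
  · intro h h'
    have h2 : a ∈ edgeSide T a b := by
      refine SimpleGraph.Reachable.trans h' (SimpleGraph.Reachable.symm ?_)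
      have h3 := h
      simp only [edgeSide, Set.mem_ofPred_eq, Sym2.eq_swap (a := b) (b := a)] at h3
      exact h3
    exact left_notMem_edgeSide hT hab h2
  · have key := hT.connected.preconnected.mem_of_closed
      (P := edgeSide T a b ∪ edgeSide T b a) ?_ (Or.inl right_mem_edgeSide) w
    · intro h
      exact key.resolve_left h
    rintro u v huv hu
    by_cases h : s(u, v) = s(a, b)
    · rcases Sym2.eq_iff.mp h with ⟨rfl, rfl⟩ | ⟨rfl, rfl⟩
      · exact Or.inl right_mem_edgeSide
      · exact Or.inr right_mem_edgeSide
    · rcases hu with hu | hu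
      · exact Or.inl (mem_edgeSide_of_adj huv h hu)
      · exact Or.inr (mem_edgeSide_of_adj huv (by rwa [Sym2.eq_swap (a := b)]) hu)

/-- A connected set meeting both sides of an edge contains both of its ends. -/
lemma IsConnSet.mem_of_crossing {S : Set W} (hS : IsConnSet T S) {x y : W} (hx : x ∈ S)
    (hxB : x ∈ edgeSide T a b) (hy : y ∈ S) (hyB : y ∉ edgeSide T a b) : a ∈ S ∧ b ∈ S := by
  obtain ⟨u, hu, v, hv, huv, hu1, hv1⟩ := hS.exists_adj_of_mem_of_notMem hx hxB hy hyB
  have : s(u, v) = s(a, b) := by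
    by_contra h
    exact hv1 (mem_edgeSide_of_adj huv h hu1)
  rcases Sym2.eq_iff.mp this with ⟨rfl, rfl⟩ | ⟨rfl, rfl⟩
  · exact ⟨hu, hv⟩
  · exact ⟨hv, hu⟩

lemma exists_leaf_mem_edgeSide [Finite W] (hT : T.IsTree) (hab : T.Adj a b) :
    ∃ w ∈ treeLeaves T, w ∈ edgeSide T a b := by
  induction hk : (edgeSide T a b).ncard using Nat.strong_induction_on generalizing a b with
  | _ k ih =>
    by_cases h : ∃ c, T.Adj b c ∧ c ≠ a
    · obtain ⟨c, hbc, hca⟩ := h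
      have hsub : edgeSide T b c ⊆ edgeSide T a b := fun w hw => by
        by_contra hw'
        exact edgeSide_disjoint hT hbc hab.symm hca hw ((mem_edgeSide_swap hT hab).mpr hw')
      have hlt : (edgeSide T b c).ncard < k := hk ▸ Set.ncard_lt_ncard
        ⟨hsub, fun h => left_notMem_edgeSide hT hbc (h right_mem_edgeSide)⟩ (Set.toFinite _)
      obtain ⟨w, hw, hw'⟩ := ih _ hlt hbc rfl
      exact ⟨w, hw, hsub hw'⟩
    · push Not at h
      refine ⟨b, Set.ncard_eq_one.mpr ⟨a, Set.ext fun c => ⟨h c, ?_⟩⟩, right_mem_edgeSide⟩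
      rintro rfl
      exact hab.symm

end EdgeSide

/-! ### Cyclic families of subtrees -/

/-- A `2n`-periodic family of connected sets such that consecutive members meet and members whose
indices have opposite parity meet only if they are consecutive modulo `2n`. -/
structure CyclicFamily {W : Type} (T : SimpleGraph W) (n : ℕ) (X : ℤ → Set W) : Prop where
  conn : ∀ k, IsConnSet T (X k)
  meet : ∀ k, (X k ∩ X (k + 1)).Nonempty
  odd : ∀ k l, Odd (k - l) → (X k ∩ X l).Nonempty →
    (2 * n : ℤ) ∣ k - l - 1 ∨ (2 * n : ℤ) ∣ k - l + 1
  periodic : ∀ k l, (2 * n : ℤ) ∣ k - l → X k = X l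

/-- Every leaf of `T` is a member of the family `X`. -/
def LeavesAreMembers {W : Type} (T : SimpleGraph W) (X : ℤ → Set W) : Prop :=
  ∀ w ∈ treeLeaves T, ∃ k, X k = {w}

namespace CyclicFamily

variable {W : Type} {T : SimpleGraph W} {n : ℕ} {X : ℤ → Set W}

lemma shift (hX : CyclicFamily T n X) : CyclicFamily T n (fun k => X (k + 1)) where
  conn k := hX.conn _
  meet k := hX.meet _
  odd k l h := by simpa using hX.odd (k + 1) (l + 1) (by simpa using h)
  periodic k l h := hX.periodic _ _ (by simpa using h)

lemma exists_index_mem_Ico (hX : CyclicFamily T n X) (hn : 3 ≤ n) (k p : ℤ) :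
    ∃ q, k ≤ q ∧ q < k + 2 * n ∧ X q = X p := by
  refine ⟨k + (p - k) % (2 * n), ?_, ?_, hX.periodic _ _ ?_⟩
  · have := Int.emod_nonneg (p - k) (b := 2 * n) (by omega)
    omega
  · have := Int.emod_lt_of_pos (p - k) (b := 2 * n) (by omega)
    omega
  · rw [← dvd_neg, show -(k + (p - k) % (2 * n) - p) = p - k - (p - k) % (2 * n) by ring]
    exact Int.dvd_self_sub_emod

lemma exists_crossing_of_subset (hX : CyclicFamily T n X) {a b : W} {p q : ℤ} (hpq : p < q)
    (hp : X p ⊆ edgeSide T a b) (hq : Disjoint (X q) (edgeSide T a b)) :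
    ∃ r, p < r ∧ r < q ∧ a ∈ X r ∧ b ∈ X r := by
  by_contra! h
  have key : ∀ r, p ≤ r → r ≤ q → X r ⊆ edgeSide T a b := by
    intro r hr
    induction r, hr using Int.leInduction with
    | base => exact fun _ => hp
    | succ r hr ih =>
      intro hrq y hy
      by_contra hyB
      obtain ⟨x, hx, hx'⟩ := hX.meet r
      have hxB := ih (by omega) hx
      obtain ⟨ha, hb⟩ := (hX.conn (r + 1)).mem_of_crossing hx' hxB hy hyB
      rcases hrq.lt_or_eq with hlt | rfl
      · exact h (r + 1) (by omega) hlt ha hb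
      · exact Set.disjoint_left.mp hq hx' hxB
  obtain ⟨x, hx⟩ := (hX.conn q).1
  exact Set.disjoint_left.mp hq hx (key q hpq.le le_rfl hx)

lemma exists_crossing_of_disjoint (hX : CyclicFamily T n X) (hT : T.IsTree) {a b : W}
    (hab : T.Adj a b) {p q : ℤ} (hpq : q < p)
    (hp : X p ⊆ edgeSide T a b) (hq : Disjoint (X q) (edgeSide T a b)) :
    ∃ r, q < r ∧ r < p ∧ a ∈ X r ∧ b ∈ X r := by
  obtain ⟨r, h1, h2, hb, ha⟩ := hX.exists_crossing_of_subset (a := b) (b := a) hpq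
    (fun x hx => (mem_edgeSide_swap hT hab).mpr (Set.disjoint_left.mp hq hx))
    (Set.disjoint_left.mpr fun x hx hx' => (mem_edgeSide_swap hT hab).mp hx' (hp hx))
  exact ⟨r, h1, h2, ha, hb⟩

lemma exists_subset_edgeSide [Finite W] (hT : T.IsTree) (hL : LeavesAreMembers T X) {a b : W}
    (hab : T.Adj a b) : ∃ p, X p ⊆ edgeSide T a b := by
  obtain ⟨w, hw, hwB⟩ := exists_leaf_mem_edgeSide hT hab
  obtain ⟨p, hp⟩ := hL w hw
  exact ⟨p, by simpa [hp] using hwB⟩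

lemma exists_disjoint_edgeSide [Finite W] (hT : T.IsTree) (hL : LeavesAreMembers T X) {a b : W}
    (hab : T.Adj a b) : ∃ p, Disjoint (X p) (edgeSide T a b) := by
  obtain ⟨p, hp⟩ := exists_subset_edgeSide hT hL hab.symm
  exact ⟨p, Set.disjoint_left.mpr fun x hx => (mem_edgeSide_swap hT hab).mp (hp hx)⟩

lemma not_subset_of_disjoint (hX : CyclicFamily T n X) {p : ℤ} {B : Set W}
    (h : Disjoint (X p) B) : ¬ X p ⊆ B := fun hsub => by
  obtain ⟨x, hx⟩ := (hX.conn p).1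
  exact Set.disjoint_left.mp h hx (hsub hx)

/-- If every leaf is a member, every edge is contained in two different members. -/
lemma exists_two_crossing [Finite W] (hX : CyclicFamily T n X) (hn : 3 ≤ n) (hT : T.IsTree)
    (hL : LeavesAreMembers T X) {a b : W} (hab : T.Adj a b) :
    ∃ k l : ℤ, k < l ∧ l < k + 2 * n ∧ (a ∈ X k ∧ b ∈ X k) ∧ (a ∈ X l ∧ b ∈ X l) := by
  obtain ⟨p, hp⟩ := exists_subset_edgeSide hT hL hab
  obtain ⟨q', hq'⟩ := exists_disjoint_edgeSide hT hL hab
  obtain ⟨q, h1, h2, hq⟩ := hX.exists_index_mem_Ico hn p q'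
  rw [← hq] at hq'
  rcases h1.eq_or_lt with rfl | hlt
  · exact absurd hp (hX.not_subset_of_disjoint hq')
  obtain ⟨k, hk1, hk2, hk⟩ := hX.exists_crossing_of_subset hlt hp hq'
  obtain ⟨l, hl1, hl2, hl⟩ := hX.exists_crossing_of_disjoint (p := p + 2 * n) hT hab h2
    (by rwa [hX.periodic (p + 2 * n) p (by simp)]) hq'
  exact ⟨k, l, by omega, by omega, hk, hl⟩

lemma false_of_consecutive_crossing [Finite W] (hX : CyclicFamily T n X) (hn : 3 ≤ n)
    (hT : T.IsTree) (hL : LeavesAreMembers T X) {a b : W} (hab : T.Adj a b) {k : ℤ}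
    (hk : a ∈ X k ∧ b ∈ X k) (hk' : a ∈ X (k + 1) ∧ b ∈ X (k + 1)) : False := by
  obtain ⟨p', hp'⟩ := exists_subset_edgeSide hT hL hab
  obtain ⟨q', hq'⟩ := exists_disjoint_edgeSide hT hL hab
  obtain ⟨p, hp1, hp2, hp⟩ := hX.exists_index_mem_Ico hn k p'
  obtain ⟨q, hq1, hq2, hq⟩ := hX.exists_index_mem_Ico hn k q'
  rw [← hp] at hp'
  rw [← hq] at hq'
  have ha := left_notMem_edgeSide hT hab
  have hb := right_mem_edgeSide (T := T) (a := a) (b := b)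
  have hpk : p ≠ k := by rintro rfl; exact ha (hp' hk.1)
  have hpk' : p ≠ k + 1 := by rintro rfl; exact ha (hp' hk'.1)
  have hqk : q ≠ k := by rintro rfl; exact Set.disjoint_left.mp hq' hk.2 hb
  have hqk' : q ≠ k + 1 := by rintro rfl; exact Set.disjoint_left.mp hq' hk'.2 hb
  have hr : ∃ r, k + 2 < r ∧ r < k + 2 * n - 1 ∧ a ∈ X r ∧ b ∈ X r := by
    rcases lt_trichotomy p q with h | rfl | h
    · obtain ⟨r, h1, h2, h3⟩ := hX.exists_crossing_of_subset h hp' hq'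
      exact ⟨r, by omega, by omega, h3⟩
    · exact absurd hp' (hX.not_subset_of_disjoint hq')
    · obtain ⟨r, h1, h2, h3⟩ := hX.exists_crossing_of_disjoint hT hab h hp' hq'
      exact ⟨r, by omega, by omega, h3⟩
  obtain ⟨r, h1, h2, har, -⟩ := hr
  rcases Int.even_or_odd (r - k) with he | ho
  · have ho : Odd (r - (k + 1)) := by
      have := he.sub_odd odd_one
      rwa [sub_sub] at this
    have hne : r - (k + 1) ≠ 2 := by rintro h; rw [h] at ho; exact absurd ho (by decide)
    rcases hX.odd r (k + 1) ho ⟨a, har, hk'.1⟩ with h | h <;>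
      have := Int.le_of_dvd (by omega) h <;> omega
  · rcases hX.odd r k ho ⟨a, har, hk.1⟩ with h | h <;>
      have := Int.le_of_dvd (by omega) h <;> omega

/-- If every leaf is a member, the members containing a given edge have indices of equal parity. -/
lemma even_sub_of_crossing [Finite W] (hX : CyclicFamily T n X) (hn : 3 ≤ n)
    (hT : T.IsTree) (hL : LeavesAreMembers T X) {a b : W} (hab : T.Adj a b) {k l : ℤ}
    (hk : a ∈ X k ∧ b ∈ X k) (hl : a ∈ X l ∧ b ∈ X l) : Even (k - l) := by
  by_contra h
  rcases hX.odd k l (Int.not_even_iff_odd.mp h) ⟨a, hk.1, hl.1⟩ with hd | hd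
  · rw [hX.periodic k (l + 1) (by rwa [← sub_sub])] at hk
    exact hX.false_of_consecutive_crossing hn hT hL hab hl hk
  · rw [hX.periodic l (k + 1) (by rwa [← dvd_neg, show -(l - (k + 1)) = k - l + 1 by ring])] at hl
    exact hX.false_of_consecutive_crossing hn hT hL hab hk hl

/-- The members at a vertex do not contain two even and two odd ones. -/
lemma even_sub_of_mem (hX : CyclicFamily T n X) (hn : 3 ≤ n) {x : W} {k l k' l' : ℤ}
    (hkl : k < l) (hlk : l < k + 2 * n) (hkl' : k' < l') (hlk' : l' < k' + 2 * n)
    (hk : x ∈ X k) (hl : x ∈ X l) (hk' : x ∈ X k') (hl' : x ∈ X l')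
    (he : Even (k - l)) (he' : Even (k' - l')) : Even (k - k') := by
  by_contra h
  have h1 : Odd (k - k') := Int.not_even_iff_odd.mp h
  have h2 : Odd (k - l') := by simpa using h1.add_even he'
  have h3 : Odd (l - k') := by
    rw [show l - k' = k - k' - (k - l) by ring]
    exact h1.sub_even he
  have h4 : Odd (l - l') := by
    rw [show l - l' = k - l' - (k - l) by ring]
    exact h2.sub_even he
  have nd : ∀ z : ℤ, 0 < z → z < 2 * n → ¬ (2 * n : ℤ) ∣ z := fun z hz hz' hd => by
    have := Int.le_of_dvd hz hd
    omega
  have e4 := nd 4 (by norm_num) (by omega)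
  have ekl := nd (l - k) (by omega) (by omega)
  have ekl' := nd (l' - k') (by omega) (by omega)
  have d1 := hX.odd k k' h1 ⟨x, hk, hk'⟩
  have d2 := hX.odd k l' h2 ⟨x, hk, hl'⟩
  have d3 := hX.odd l k' h3 ⟨x, hl, hk'⟩
  have d4 := hX.odd l l' h4 ⟨x, hl, hl'⟩
  have cast : ∀ z : ℤ, (2 * n : ℤ) ∣ z ↔ (z : ZMod (2 * n)) = 0 := fun z => by
    rw [ZMod.intCast_zmod_eq_zero_iff_dvd]
    push_cast
    rfl
  simp only [cast] at *
  push_cast at *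
  grind

lemma nontrivial_of_three_le (hX : CyclicFamily T n X) (hn : 3 ≤ n) : Nontrivial W := by
  obtain ⟨x, hx⟩ := (hX.conn 0).1
  obtain ⟨y, hy⟩ := (hX.conn 3).1
  refine ⟨x, y, ?_⟩
  rintro rfl
  rcases hX.odd 3 0 (by decide) ⟨x, hy, hx⟩ with h | h <;>
    have := Int.le_of_dvd (by norm_num) h <;> omega

/-- If every leaf is a member and some edge is contained in an even member, then each odd member is
a single leaf. -/
lemma exists_leaf_eq_of_odd [Finite W] (hX : CyclicFamily T n X) (hn : 3 ≤ n) (hT : T.IsTree)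
    (hL : LeavesAreMembers T X) {a b : W} (hab : T.Adj a b) {m : ℤ} (hm : Even m)
    (hma : a ∈ X m) (hmb : b ∈ X m) {k : ℤ} (hk : Odd k) : ∃ t ∈ treeLeaves T, X k = {t} := by
  have : Nontrivial W := hX.nontrivial_of_three_le hn
  have hclosed : ∀ x, x ∈ {x | ∃ y, T.Adj x y ∧ ∃ l, Even l ∧ x ∈ X l ∧ y ∈ X l} := by
    refine hT.connected.preconnected.mem_of_closed ?_ (x := a) ⟨b, hab, m, hm, hma, hmb⟩
    rintro u v huv ⟨y, huy, l, hl, hul, hyl⟩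
    obtain ⟨p, q, hpq, hqp, hp, hq⟩ := hX.exists_two_crossing hn hT hL huy
    obtain ⟨p', q', hpq', hqp', hp', hq'⟩ := hX.exists_two_crossing hn hT hL huv
    have h1 := hX.even_sub_of_crossing hn hT hL huy ⟨hul, hyl⟩ hp
    have h2 := hX.even_sub_of_mem hn hpq hqp hpq' hqp' hp.1 hq.1 hp'.1 hq'.1
      (hX.even_sub_of_crossing hn hT hL huy hp hq) (hX.even_sub_of_crossing hn hT hL huv hp' hq')
    refine ⟨u, huv.symm, p', ?_, hp'.2, hp'.1⟩
    rw [show p' = l - (l - p) - (p - p') by ring]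
    exact (hl.sub h1).sub h2
  have heven : ∀ u v, T.Adj u v → ∀ r, u ∈ X r → v ∈ X r → Even r := by
    intro u v huv r hur hvr
    obtain ⟨y, huy, l, hl, hul, hyl⟩ := hclosed u
    obtain ⟨p, q, hpq, hqp, hp, hq⟩ := hX.exists_two_crossing hn hT hL huy
    obtain ⟨p', q', hpq', hqp', hp', hq'⟩ := hX.exists_two_crossing hn hT hL huv
    have h1 := hX.even_sub_of_crossing hn hT hL huy ⟨hul, hyl⟩ hp
    have h2 := hX.even_sub_of_mem hn hpq hqp hpq' hqp' hp.1 hq.1 hp'.1 hq'.1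
      (hX.even_sub_of_crossing hn hT hL huy hp hq) (hX.even_sub_of_crossing hn hT hL huv hp' hq')
    have h3 := hX.even_sub_of_crossing hn hT hL huv hp' ⟨hur, hvr⟩
    rw [show r = l - (l - p) - (p - p') - (p' - r) by ring]
    exact ((hl.sub h1).sub h2).sub h3
  obtain ⟨t, ht⟩ := (hX.conn k).1
  have hXk : X k = {t} := by
    refine Set.Subset.antisymm (fun y hy => ?_) (by simpa using ht)
    by_contra hyt
    obtain ⟨u, hu, v, hv, huv, -⟩ :=
      (hX.conn k).exists_adj_of_mem_of_notMem (P := {t}) ht rfl hy hyt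
    exact Int.not_even_iff_odd.mpr hk (heven u v huv k hu hv)
  have hnext : t ∈ X (k + 1) := by
    obtain ⟨x, hx, hx'⟩ := hX.meet k
    rw [hXk] at hx
    rwa [← Set.mem_singleton_iff.mp hx]
  have hprev : t ∈ X (k + 2 * n - 1) := by
    obtain ⟨x, hx', hx⟩ := hX.meet (k + 2 * n - 1)
    rw [hX.periodic (k + 2 * n - 1 + 1) k (by simp), hXk] at hx
    rwa [← Set.mem_singleton_iff.mp hx]
  refine ⟨t, ?_, hXk⟩
  obtain ⟨b, hb⟩ := hT.connected.preconnected.exists_adj_of_nontrivial t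
  refine Set.ncard_eq_one.mpr ⟨b, Set.ext fun b' => ⟨fun hb' => ?_, ?_⟩⟩
  swap
  · rintro rfl
    exact hb
  by_contra hne
  have locate : ∀ c, T.Adj t c →
      ∃ p, k + 2 ≤ p ∧ p ≤ k + 2 * n - 2 ∧ X p ⊆ edgeSide T t c := by
    intro c hc
    have htc := left_notMem_edgeSide hT hc
    obtain ⟨p', hp'⟩ := exists_subset_edgeSide hT hL hc
    obtain ⟨p, hp1, hp2, hp⟩ := hX.exists_index_mem_Ico hn k p'
    rw [← hp] at hp'
    have h1 : p ≠ k := by rintro rfl; exact htc (hp' ht)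
    have h2 : p ≠ k + 1 := by rintro rfl; exact htc (hp' hnext)
    have h3 : p ≠ k + 2 * n - 1 := by rintro rfl; exact htc (hp' hprev)
    exact ⟨p, by omega, by omega, hp'⟩
  obtain ⟨p, hp1, hp2, hp⟩ := locate b hb
  obtain ⟨q, hq1, hq2, hq'⟩ := locate b' hb'
  have hq : Disjoint (X q) (edgeSide T t b) :=
    Set.disjoint_left.mpr fun x hx => edgeSide_disjoint hT hb' hb hne (hq' hx)
  have hr : ∃ r, k + 2 < r ∧ r < k + 2 * n - 2 ∧ t ∈ X r ∧ b ∈ X r := by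
    rcases lt_trichotomy p q with h | rfl | h
    · obtain ⟨r, h1, h2, h3⟩ := hX.exists_crossing_of_subset h hp hq
      exact ⟨r, by omega, by omega, h3⟩
    · exact absurd hp (hX.not_subset_of_disjoint hq)
    · obtain ⟨r, h1, h2, h3⟩ := hX.exists_crossing_of_disjoint hT hb h hp hq
      exact ⟨r, by omega, by omega, h3⟩
  obtain ⟨r, hr1, hr2, hrt, hrb⟩ := hr
  rcases hX.odd r k ((heven t b hb r hrt hrb).sub_odd hk) ⟨t, hrt, ht⟩ with h | h <;>
    have := Int.le_of_dvd (by omega) h <;> omega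

lemma le_ncard_leaves_of_even [Finite W] (hX : CyclicFamily T n X) (hn : 3 ≤ n) (hT : T.IsTree)
    (hL : LeavesAreMembers T X) {a b : W} (hab : T.Adj a b) {m : ℤ} (hm : Even m)
    (hma : a ∈ X m) (hmb : b ∈ X m) : n ≤ (treeLeaves T).ncard := by
  choose t htl ht using fun i : Fin n =>
    hX.exists_leaf_eq_of_odd hn hT hL hab hm hma hmb (k := 2 * (i : ℕ) + 1) (odd_two_mul_add_one _)
  have mem : ∀ i : Fin n, t i ∈ X (2 * (i : ℕ) + 1) := fun i => by simp [ht]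
  have hnext : ∀ i : Fin n, t i ∈ X (2 * (i : ℕ) + 2) := fun i => by
    obtain ⟨x, hx, hx'⟩ := hX.meet (2 * (i : ℕ) + 1)
    rw [ht i] at hx
    rw [← Set.mem_singleton_iff.mp hx]
    rwa [add_assoc] at hx'
  have hprev : ∀ i : Fin n, t i ∈ X (2 * (i : ℕ)) := fun i => by
    obtain ⟨x, hx', hx⟩ := hX.meet (2 * (i : ℕ))
    rw [ht i] at hx
    rwa [← Set.mem_singleton_iff.mp hx]
  have hinj : Function.Injective t := by
    intro i j hij
    wlog hlt : i < j generalizing i j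
    · rcases (not_lt.mp hlt).lt_or_eq with h | h
      · exact (this hij.symm h).symm
      · exact h.symm
    have hlt' : (i : ℕ) < j := hlt
    have hj := j.2
    have d1 := hX.odd (2 * (j : ℕ) + 2) (2 * (i : ℕ) + 1)
      ⟨(j : ℤ) - i, by ring⟩ ⟨t j, hnext j, hij ▸ mem i⟩
    have d2 := hX.odd (2 * (j : ℕ)) (2 * (i : ℕ) + 1)
      ⟨(j : ℤ) - i - 1, by ring⟩ ⟨t j, hprev j, hij ▸ mem i⟩
    rcases d1 with d1 | d1
    · have := Int.le_of_dvd (by omega) d1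
      omega
    · rcases d2 with d2 | d2
      · have := Int.le_of_dvd (by norm_num)
          ((by ring : (2 * (j : ℕ) + 2 - (2 * (i : ℕ) + 1) + 1 : ℤ) -
            (2 * (j : ℕ) - (2 * (i : ℕ) + 1) - 1) = 4) ▸ dvd_sub d1 d2)
        omega
      · have := Int.le_of_dvd (by omega) d2
        omega
  calc n = (Set.range t).ncard := by
        rw [← Set.image_univ, Set.ncard_image_of_injective _ hinj, Set.ncard_univ, Nat.card_fin]
    _ ≤ _ := Set.ncard_le_ncard (Set.range_subset_iff.mpr htl) (Set.toFinite _)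

lemma le_ncard_leaves_of_leavesAreMembers [Finite W] (hX : CyclicFamily T n X) (hn : 3 ≤ n)
    (hT : T.IsTree) (hL : LeavesAreMembers T X) : n ≤ (treeLeaves T).ncard := by
  have : Nontrivial W := hX.nontrivial_of_three_le hn
  obtain ⟨a, -⟩ := (hX.conn 0).1
  obtain ⟨b, hab⟩ := hT.connected.preconnected.exists_adj_of_nontrivial a
  obtain ⟨m, -, -, -, ⟨hma, hmb⟩, -⟩ := hX.exists_two_crossing hn hT hL hab
  rcases Int.even_or_odd m with hm | hm
  · exact hX.le_ncard_leaves_of_even hn hT hL hab hm hma hmb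
  · refine hX.shift.le_ncard_leaves_of_even hn hT (fun w hw => ?_) hab (hm.sub_odd odd_one)
      (by simpa using hma) (by simpa using hmb)
    obtain ⟨k, hk⟩ := hL w hw
    exact ⟨k - 1, by simpa using hk⟩

/-- Deleting a vertex `w` with a single neighbour keeps a cyclic family cyclic if no member
is `{w}`. -/
lemma induce_compl_singleton (hX : CyclicFamily T n X) {w a : W} (hw : T.neighborSet w = {a})
    (hne : ∀ k, X k ≠ {w}) :
    CyclicFamily (T.induce {w}ᶜ) n (fun k => Subtype.val ⁻¹' X k) := by
  have hadj : ∀ v, T.Adj w v ↔ v = a := fun v => by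
    rw [← SimpleGraph.mem_neighborSet, hw, Set.mem_singleton_iff]
  have haw : a ≠ w := ((hadj a).mpr rfl).ne'
  have hex : ∀ k, ∃ x ∈ X k, x ≠ w := fun k => by
    by_contra! h
    exact hne k ((Set.Nonempty.subset_singleton_iff (hX.conn k).1).mp h)
  refine ⟨fun k => ⟨?_, ?_⟩, fun k => ?_, fun k l hkl hmeet => ?_, fun k l hkl => ?_⟩
  · obtain ⟨x, hx, hxw⟩ := hex k
    exact ⟨⟨x, hxw⟩, hx⟩
  · intro P x hx hxP hP y hy
    have key := (hX.conn k).2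
      {z | (∃ h : z ≠ w, (⟨z, h⟩ : ({w}ᶜ : Set W)) ∈ P) ∨ (z = w ∧ ⟨a, haw⟩ ∈ P)}
      x hx (Or.inl ⟨x.2, hxP⟩) ?_ hy
    · rcases key with ⟨h, h'⟩ | ⟨h, -⟩
      · exact h'
      · exact absurd h y.2
    intro u hu v hv huv huP
    by_cases hvw : v = w
    · subst hvw
      have hua := (hadj u).mp huv.symm
      subst hua
      rcases huP with ⟨h, h'⟩ | ⟨h, -⟩
      · exact Or.inr ⟨rfl, h'⟩
      · exact absurd h haw
    · refine Or.inl ⟨hvw, ?_⟩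
      rcases huP with ⟨h, h'⟩ | ⟨rfl, h⟩
      · exact hP ⟨u, h⟩ hu ⟨v, hvw⟩ hv huv h'
      · have hva := (hadj v).mp huv
        subst hva
        exact h
  · obtain ⟨x, hx, hx'⟩ := hX.meet k
    by_cases hxw : x = w
    · subst hxw
      have hmem : ∀ l, x ∈ X l → a ∈ X l := fun l hl => by
        obtain ⟨y, hy, hyx⟩ := hex l
        obtain ⟨u, hu, v, hv, huv, hu', -⟩ :=
          (hX.conn l).exists_adj_of_mem_of_notMem (P := {x}) hl rfl hy hyx
        rw [Set.mem_singleton_iff.mp hu', hadj] at huv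
        rwa [← huv]
      exact ⟨⟨a, haw⟩, hmem k hx, hmem (k + 1) hx'⟩
    · exact ⟨⟨x, hxw⟩, hx, hx'⟩
  · obtain ⟨x, hx, hx'⟩ := hmeet
    exact hX.odd k l hkl ⟨x, hx, hx'⟩
  · simp only [hX.periodic k l hkl]

end CyclicFamily

lemma ncard_leaves_induce_compl_singleton_le {W : Type} [Finite W] {T : SimpleGraph W} {w a : W}
    (hw : T.neighborSet w = {a}) :
    (treeLeaves (T.induce {w}ᶜ)).ncard ≤ (treeLeaves T).ncard := by
  classical
  have hadj : ∀ v, T.Adj w v ↔ v = a := fun v => by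
    rw [← SimpleGraph.mem_neighborSet, hw, Set.mem_singleton_iff]
  refine Set.ncard_le_ncard_of_injOn (fun v => if (v : W) = a then w else v) ?_ ?_ (Set.toFinite _)
  · intro v hv
    split_ifs with hva
    · exact Set.ncard_eq_one.mpr ⟨a, hw⟩
    · have himg : T.neighborSet v = Subtype.val '' (T.induce {w}ᶜ).neighborSet v := by
        ext y
        simp only [SimpleGraph.mem_neighborSet, Set.mem_image, SimpleGraph.comap_adj,
          Function.Embedding.subtype_apply, Subtype.exists, exists_and_right, exists_eq_right]
        refine ⟨fun h => ⟨?_, h⟩, fun h => h.2⟩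
        rintro rfl
        exact hva ((hadj _).mp h.symm)
      change (T.neighborSet v).ncard = 1
      rw [himg, Set.ncard_image_of_injective _ Subtype.val_injective]
      exact hv
  · intro x _ y _ hxy
    have hx : (x : W) ≠ w := x.2
    have hy : (y : W) ≠ w := y.2
    grind

theorem CyclicFamily.le_ncard_leaves {n : ℕ} (hn : 3 ≤ n) {W : Type} [Finite W]
    {T : SimpleGraph W} (hT : T.IsTree) {X : ℤ → Set W} (hX : CyclicFamily T n X) :
    n ≤ (treeLeaves T).ncard := by
  induction hk : Nat.card W using Nat.strong_induction_on generalizing W with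
  | _ k ih =>
    by_cases hL : LeavesAreMembers T X
    · exact hX.le_ncard_leaves_of_leavesAreMembers hn hT hL
    simp only [LeavesAreMembers, not_forall, not_exists] at hL
    obtain ⟨w, hw, hne⟩ := hL
    obtain ⟨a, ha⟩ := Set.ncard_eq_one.mp hw
    have hT' : (T.induce {w}ᶜ).IsTree := by
      have := Fintype.ofFinite (T.neighborSet w)
      refine ⟨hT.connected.induce_compl_singleton_of_degree_eq_one ?_, hT.isAcyclic.induce _⟩
      rw [← SimpleGraph.card_neighborSet_eq_degree, ← Nat.card_eq_fintype_card,
        Nat.card_coe_set_eq]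
      exact hw
    have hlt : Nat.card ({w}ᶜ : Set W) < k := by
      rw [← hk, Nat.card_coe_set_eq, ← Set.ncard_univ]
      exact Set.ncard_lt_ncard (by simp [Set.ssubset_univ_iff])
    exact (ih _ hlt hT' (hX.induce_compl_singleton ha hne) rfl).trans
      (ncard_leaves_induce_compl_singleton_le ha)

/-! ### The digraph `C_n` -/

/-- The vertex of `C_n` with index `k` modulo `n`. -/
def cycIdx (n : ℕ) [NeZero n] (k : ℤ) : Fin n :=
  ⟨(k % n).toNat, by
    have := Int.emod_lt_of_pos k (b := n) (by exact_mod_cast NeZero.pos n)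
    have := NeZero.pos n
    omega⟩

section CycIdx

variable {n : ℕ} [NeZero n]

lemma coe_cycIdx (k : ℤ) : ((cycIdx n k).val : ℤ) = k % n :=
  Int.toNat_of_nonneg (Int.emod_nonneg k (by exact_mod_cast NeZero.ne n))

lemma cycIdx_eq_iff {k l : ℤ} : cycIdx n k = cycIdx n l ↔ (n : ℤ) ∣ k - l := by
  rw [Fin.ext_iff, ← Nat.cast_inj (R := ℤ), coe_cycIdx, coe_cycIdx,
    Int.emod_eq_emod_iff_emod_sub_eq_zero, Int.dvd_iff_emod_eq_zero]

lemma cnRel_cycIdx {a b : ℤ} :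
    CnRel n (cycIdx n a) (cycIdx n b) ↔ (n : ℤ) ∣ b - a ∨ (n : ℤ) ∣ b - a - 1 := by
  refine or_congr cycIdx_eq_iff ?_
  rw [← Nat.cast_inj (R := ℤ), Int.natCast_mod, Nat.cast_add, coe_cycIdx, coe_cycIdx, Nat.cast_one,
    Int.emod_add_emod, Int.emod_eq_emod_iff_emod_sub_eq_zero, ← Int.dvd_iff_emod_eq_zero, sub_sub]

end CycIdx

/-- The sources and sinks of a subtree representation of `C_n`, listed along the cycle. -/
def cyclicSets {W : Type} {n : ℕ} [NeZero n] {T : SimpleGraph W} (R : SubtreeRep (CnRel n) T)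
    (k : ℤ) : Set W :=
  if k % 2 = 0 then R.src (cycIdx n (k / 2)) else R.snk (cycIdx n ((k + 1) / 2))

section CyclicSets

variable {W : Type} {n : ℕ} [NeZero n] {T : SimpleGraph W} (R : SubtreeRep (CnRel n) T)

lemma cyclicSets_even (i : ℤ) : cyclicSets R (2 * i) = R.src (cycIdx n i) := by
  simp [cyclicSets]

lemma cyclicSets_odd (i : ℤ) : cyclicSets R (2 * i + 1) = R.snk (cycIdx n (i + 1)) := by
  rw [cyclicSets, if_neg (by omega), show (2 * i + 1 + 1) / 2 = i + 1 by omega]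

lemma cyclicSets_meet_iff (i j : ℤ) :
    (cyclicSets R (2 * i) ∩ cyclicSets R (2 * j + 1)).Nonempty ↔
      (n : ℤ) ∣ j + 1 - i ∨ (n : ℤ) ∣ j - i := by
  rw [cyclicSets_even, cyclicSets_odd, ← R.rep, cnRel_cycIdx,
    show j + 1 - i - 1 = j - i by ring]

lemma cyclicFamily_cyclicSets : CyclicFamily T n (cyclicSets R) where
  conn k := by
    unfold cyclicSets
    split_ifs
    · exact isConnSet_of_induce_connected (R.src_connected _)
    · exact isConnSet_of_induce_connected (R.snk_connected _)
  meet k := by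
    obtain ⟨i, rfl | rfl⟩ := Int.even_or_odd' k
    · exact (cyclicSets_meet_iff R i i).mpr (by simp)
    · rw [Set.inter_comm, show 2 * i + 1 + 1 = 2 * (i + 1) by ring]
      exact (cyclicSets_meet_iff R (i + 1) i).mpr (by simp)
  odd k l hodd hmeet := by
    obtain ⟨i, rfl | rfl⟩ := Int.even_or_odd' k <;> obtain ⟨j, rfl | rfl⟩ := Int.even_or_odd' l
    · exact absurd hodd (by simp [Int.not_odd_iff_even, ← mul_sub])
    · rcases (cyclicSets_meet_iff R i j).mp hmeet with ⟨c, hc⟩ | ⟨c, hc⟩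
      · exact Or.inl ⟨-c, by linear_combination -2 * hc⟩
      · exact Or.inr ⟨-c, by linear_combination -2 * hc⟩
    · rw [Set.inter_comm] at hmeet
      rcases (cyclicSets_meet_iff R j i).mp hmeet with ⟨c, hc⟩ | ⟨c, hc⟩
      · exact Or.inr ⟨c, by linear_combination 2 * hc⟩
      · exact Or.inl ⟨c, by linear_combination 2 * hc⟩
    · exact absurd hodd (by simp [Int.not_odd_iff_even, ← mul_sub])
  periodic k l := by
    rintro ⟨c, hc⟩
    obtain rfl : k = l + 2 * (n * c) := by linear_combination hc
    obtain ⟨i, rfl | rfl⟩ := Int.even_or_odd' l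
    · rw [← mul_add, cyclicSets_even, cyclicSets_even,
        cycIdx_eq_iff.mpr (show (n : ℤ) ∣ i + n * c - i by simp)]
    · rw [show 2 * i + 1 + 2 * (n * c) = 2 * (i + n * c) + 1 by ring, cyclicSets_odd,
        cyclicSets_odd, cycIdx_eq_iff.mpr (show (n : ℤ) ∣ i + n * c + 1 - (i + 1) by simp)]

end CyclicSets

/-- The representation of a digraph in a star with one leaf per vertex. -/
def starSubtreeRep {V : Type} (E : V → V → Prop) :
    SubtreeRep E (SimpleGraph.starGraph (none : Option V)) where
  src u := insert none (some '' {v | E u v})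
  snk v := {some v}
  src_connected u := by
    rw [SimpleGraph.connected_iff_exists_forall_reachable]
    refine ⟨⟨none, Set.mem_insert _ _⟩, fun x => ?_⟩
    by_cases h : (x : Option V) = none
    · rw [show x = ⟨none, Set.mem_insert _ _⟩ from Subtype.ext h]
    · exact SimpleGraph.Adj.reachable (by simp [Ne.symm h])
  snk_connected v := by
    rw [SimpleGraph.connected_iff_exists_forall_reachable]
    exact ⟨⟨some v, rfl⟩, fun x => by rw [Subsingleton.elim x ⟨some v, rfl⟩]⟩
  rep u v := by
    rw [Set.inter_singleton_nonempty]
    simp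

lemma ncard_leaves_starGraph {V : Type} [Fintype V] (hV : Fintype.card V ≠ 1) :
    (treeLeaves (SimpleGraph.starGraph (none : Option V))).ncard = Fintype.card V := by
  have hcard : (Set.range (some : V → Option V)).ncard = Fintype.card V := by
    rw [← Set.image_univ, Set.ncard_image_of_injective _ (Option.some_injective V),
      Set.ncard_univ, Nat.card_eq_fintype_card]
  have hleaf : treeLeaves (SimpleGraph.starGraph (none : Option V)) = Set.range some := by
    ext x
    cases x with
    | none =>
      have : (SimpleGraph.starGraph (none : Option V)).neighborSet none = Set.range some := by
        ext y
        cases y <;> simp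
      refine iff_of_false (fun h => hV ?_) (by simp)
      rw [← hcard, ← this]
      exact h
    | some v =>
      have : (SimpleGraph.starGraph (none : Option V)).neighborSet (some v) = {none} := by
        ext y
        cases y <;> simp
      simp [treeLeaves, this]
  rw [hleaf, hcard]

theorem digLeafage_cnRel {n : ℕ} (hn : 3 ≤ n) : digLeafage (CnRel n) = n := by
  have : NeZero n := ⟨by omega⟩
  have hmem : n ∈ {k | ∃ (W : Type) (_ : Fintype W) (T : SimpleGraph W),
      T.IsTree ∧ Nonempty (SubtreeRep (CnRel n) T) ∧ (treeLeaves T).ncard = k} := by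
    refine ⟨Option (Fin n), inferInstance, SimpleGraph.starGraph none,
      SimpleGraph.isTree_starGraph _, ⟨starSubtreeRep _⟩, ?_⟩
    rw [ncard_leaves_starGraph (by simp; omega), Fintype.card_fin]
  refine le_antisymm (Nat.sInf_le hmem) (le_csInf ⟨n, hmem⟩ ?_)
  rintro _ ⟨W, _, T, hT, ⟨R⟩, rfl⟩
  exact (cyclicFamily_cyclicSets R).le_ncard_leaves hn hT

/-! ### Ferrers dimension of `C_n` -/

lemma IsFerrers.compl {V : Type} {F : V → V → Prop} (hF : IsFerrers F) :
    IsFerrers (fun u v => ¬ F u v) := fun u u' =>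
  (hF u' u).imp (fun h _ hv hv' => hv (h hv')) (fun h _ hv hv' => hv (h hv'))

lemma IsFerrers.rel_or_rel {V : Type} {F : V → V → Prop} (hF : IsFerrers F) {u v u' v' : V}
    (h : F u v) (h' : F u' v') : F u v' ∨ F u' v :=
  (hF u u').elim (fun hs => Or.inr (hs h)) (fun hs => Or.inl (hs h'))

lemma three_le_of_ferrers_inter_eq_cnRel {n : ℕ} (hn : 3 ≤ n) {k : ℕ}
    (F : Fin k → Fin n → Fin n → Prop) (hF : ∀ i, IsFerrers (F i))
    (hE : ∀ u v, CnRel n u v ↔ ∀ i, F i u v) : 3 ≤ k := by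
  have : NeZero n := ⟨by omega⟩
  by_contra! hk
  let M : Prop → ℤ → ℤ → Prop := fun c a b =>
    ∃ i : Fin k, (i.val = 0 ↔ c) ∧ ¬ F i (cycIdx n a) (cycIdx n b)
  have cover : ∀ c a b, ¬ CnRel n (cycIdx n a) (cycIdx n b) → M c a b ∨ M (¬ c) a b := by
    intro c a b h
    rw [hE] at h
    push Not at h
    obtain ⟨i, hi⟩ := h
    by_cases hc : i.val = 0 ↔ c
    · exact Or.inl ⟨i, hc, hi⟩
    · exact Or.inr ⟨i, by tauto, hi⟩
  have conflict : ∀ {c a b a' b'}, M c a b → M c a' b' → CnRel n (cycIdx n a) (cycIdx n b') →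
      CnRel n (cycIdx n a') (cycIdx n b) → False := by
    rintro c a b a' b' ⟨i, hi, hab⟩ ⟨j, hj, hab'⟩ h h'
    obtain rfl : i = j := by
      have := i.2
      have := j.2
      ext
      by_cases c <;> simp_all <;> omega
    exact ((hF i).rel_or_rel ((hE _ _).mp h i) ((hE _ _).mp h' i)).elim hab hab'
  have notDvd : ∀ z : ℤ, 0 < z → z < n → ¬ (n : ℤ) ∣ z := fun z hz hz' hd => by
    have := Int.le_of_dvd hz hd
    omega
  obtain ⟨d, hd⟩ : ∃ d : ℕ, 2 * d = n ∨ 2 * d = n + 1 := ⟨(n + 1) / 2, by omega⟩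
  have hfwd : ∀ u : ℤ, ¬ CnRel n (cycIdx n u) (cycIdx n (u + d)) := by
    intro u
    rw [cnRel_cycIdx, show u + d - u = (d : ℤ) by ring]
    exact not_or.mpr ⟨notDvd _ (by omega) (by omega), notDvd _ (by omega) (by omega)⟩
  have hbwd : ∀ u : ℤ, ¬ CnRel n (cycIdx n (u + d)) (cycIdx n (u + 1)) := by
    intro u
    rw [cnRel_cycIdx, show u + 1 - (u + d) = -((d : ℤ) - 1) by ring,
      show -((d : ℤ) - 1) - 1 = -(d : ℤ) by ring, dvd_neg, dvd_neg]
    exact not_or.mpr ⟨notDvd _ (by omega) (by omega), notDvd _ (by omega) (by omega)⟩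
  have hloop : ∀ u : ℤ, CnRel n (cycIdx n u) (cycIdx n u) := fun u => Or.inl rfl
  have hsucc : ∀ u : ℤ, CnRel n (cycIdx n u) (cycIdx n (u + 1)) := fun u =>
    cnRel_cycIdx.mpr (by simp)
  have hrot : ∀ c u, M c u (u + d) → M c (u + 1) (u + 1 + d) := by
    intro c u h
    have h' := (cover c _ _ (hbwd u)).resolve_left fun h' =>
      conflict h h' (hsucc u) (hloop _)
    refine (cover c _ _ (hfwd (u + 1))).resolve_right fun h'' => conflict h' h'' ?_ (hloop _)
    rw [add_right_comm]
    exact hsucc _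
  have hall : ∀ c, M c 0 (0 + d) → ∀ r : ℕ, M c r (r + d) := by
    intro c h r
    induction r with
    | zero => exact_mod_cast h
    | succ r ih => exact_mod_cast hrot c r ih
  obtain ⟨c, hc⟩ : ∃ c, M c 0 (0 + d) := by
    rcases cover True _ _ (hfwd 0) with h | h
    · exact ⟨_, h⟩
    · exact ⟨_, h⟩
  refine conflict hc (hall c hc d) (cnRel_cycIdx.mpr ?_) (by simpa using hloop d)
  rcases hd with hd | hd
  · exact Or.inl ⟨1, by omega⟩
  · exact Or.inr ⟨1, by omega⟩

lemma exists_ferrers_partition_compl_cnRel {n : ℕ} (hn : 3 ≤ n) :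
    ∃ F : Fin 3 → Fin n → Fin n → Prop,
      (∀ i, IsFerrers (F i)) ∧ (∀ i j, i ≠ j → ∀ u v, ¬ (F i u v ∧ F j u v)) ∧
      (∀ u v, ¬ CnRel n u v ↔ ∃ i, F i u v) := by
  refine ⟨![fun u v => u.val + 1 < v.val, fun u v => v.val < u.val ∧ u.val + 1 < n,
    fun u v => v.val < u.val ∧ u.val + 1 = n ∧ 0 < v.val], ?_, ?_, ?_⟩
  · intro i u u'
    have key : ∀ A B : Set (Fin n), (¬ A ⊆ B → B ⊆ A) → A ⊆ B ∨ B ⊆ A := fun A B h => by tauto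
    apply key
    rw [Set.not_subset]
    rintro ⟨x, hx, hx'⟩ y hy
    fin_cases i <;> simp at hx hx' hy ⊢ <;> omega
  · intro i j hij u v
    fin_cases i <;> fin_cases j <;> simp at hij ⊢ <;> omega
  · intro u v
    have hu := u.2
    have hv := v.2
    simp only [Fin.exists_fin_succ, CnRel, Fin.ext_iff]
    rcases (Nat.succ_le_of_lt hu).lt_or_eq with h | h
    · rw [Nat.mod_eq_of_lt h]
      simp
      omega
    · rw [show u.val + 1 = n from h, Nat.mod_self]
      simp
      omega

/-- For `n ≥ 3`, the digraph `C_n` (directed `n`-cycle plus loops)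
satisfies `l(C_n) = n` and `f(C_n) = f*(C_n) = 3`. -/
theorem stmt_8 (n : ℕ) (hn : 3 ≤ n) :
    digLeafage (CnRel n) = n ∧ ferrersDim (CnRel n) = 3 ∧ fstar (CnRel n) = 3 := by
  have hinter : ∀ {k : ℕ} {F : Fin k → Fin n → Fin n → Prop},
      (∀ u v, ¬ CnRel n u v ↔ ∃ i, F i u v) → ∀ u v, CnRel n u v ↔ ∀ i, ¬ F i u v :=
    fun h u v => by rw [← not_exists, ← h, not_not]
  obtain ⟨F, hF, hdisj, hE⟩ := exists_ferrers_partition_compl_cnRel hn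
  refine ⟨digLeafage_cnRel hn, le_antisymm (Nat.sInf_le ?_) (le_csInf ⟨3, ?_⟩ ?_),
    le_antisymm (Nat.sInf_le ⟨F, hF, hdisj, hE⟩) (le_csInf ⟨3, F, hF, hdisj, hE⟩ ?_)⟩
  · exact ⟨_, fun i => (hF i).compl, hinter hE⟩
  · exact ⟨_, fun i => (hF i).compl, hinter hE⟩
  · rintro k ⟨G, hG, hGE⟩
    exact three_le_of_ferrers_inter_eq_cnRel hn G hG hGE
  · rintro k ⟨G, hG, -, hGE⟩
    exact three_le_of_ferrers_inter_eq_cnRel hn _ (fun i => (hG i).compl) (hinter hGE)
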